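/- Let F : ℝⁿ × ℝⁿ → ℝ be smooth on ℝⁿ × (ℝⁿ ∖ {0}) and positively 1-homogeneous in its second argument, let φ : ℝⁿ → ℝⁿ be a smooth diffeomorphism onto an open subset of ℝⁿ, and let F̄ be the expression of F in the φ-coordinates. Then for every x, every y ≠ 0 and every index i the following identity holds: ∑_s ∂²F/∂x^s∂y^i(x,y)·y^s − ∑_s ∂²F/∂x^i∂y^s(x,y)·y^s = ∑_{s,l,m} [∂²F̄/∂x̄^m∂ȳ^l − ∂²F̄/∂x̄^l∂ȳ^m](φ(x), Dφ(x)·y) · (∂φ^m/∂x^s)(x) · (∂φ^l/∂x^i)(x) · y^s + ∑_{s,k,l,r} ∂²F̄/∂ȳ^r∂ȳ^l(φ(x), Dφ(x)·y) · [ (∂²φ^l/∂x^s∂x^k)(x)·(∂φ^r/∂x^i)(x) − (∂²φ^l/∂x^i∂x^k)(x)·(∂φ^r/∂x^s)(x) ] · y^s·y^k. -/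

import Mathlib

open scoped BigOperators Topology
noncomputable section

abbrev E (n : ℕ) := Fin n → ℝ

/-- Partial derivative with respect to the base coordinate `x^i`. -/
def pdx {n : ℕ} (i : Fin n) (f : E n × E n → ℝ) (p : E n × E n) : ℝ :=
  fderiv ℝ f p (Pi.single i 1, 0)

/-- Partial derivative with respect to the fibre coordinate `y^i`. -/
def pdy {n : ℕ} (i : Fin n) (f : E n × E n → ℝ) (p : E n × E n) : ℝ :=
  fderiv ℝ f p (0, Pi.single i 1)

/-- A Finsler function on `ℝⁿ`. -/
structure IsFinsler {n : ℕ} (F : E n × E n → ℝ) : Prop where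
  smooth : ContDiffOn ℝ (⊤ : ℕ∞) F {p : E n × E n | p.2 ≠ 0}
  homog : ∀ (x y : E n) (c : ℝ), 0 < c → F (x, c • y) = c * F (x, y)
  pos : ∀ (x y : E n), y ≠ 0 → 0 < F (x, y)
  posDef : ∀ (x y : E n), y ≠ 0 →
    (Matrix.of fun i j : Fin n =>
      (1 / 2) * pdy i (pdy j (fun p => F p ^ 2)) (x, y)).PosDef

/-- A geodesic of `(ℝⁿ, F)`: a `C²` curve on a nontrivial open interval, with nowhere
vanishing velocity, positive constant speed, satisfying the Euler–Lagrange equations. -/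
structure IsGeodesic {n : ℕ} (F : E n × E n → ℝ) (γ : ℝ → E n) (t₁ t₂ : ℝ) : Prop where
  lt : t₁ < t₂
  smooth : ContDiffOn ℝ 2 γ (Set.Ioo t₁ t₂)
  vel : ∀ t ∈ Set.Ioo t₁ t₂, deriv γ t ≠ 0
  constSpeed : ∃ c : ℝ, 0 < c ∧ ∀ t ∈ Set.Ioo t₁ t₂, F (γ t, deriv γ t) = c
  eulerLagrange : ∀ (i : Fin n), ∀ t ∈ Set.Ioo t₁ t₂,
    deriv (fun s => pdy i F (γ s, deriv γ s)) t = pdx i F (γ t, deriv γ t)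

/-- The Hamel equations in the standard coordinates. -/
def SatisfiesHamel {n : ℕ} (F : E n × E n → ℝ) : Prop :=
  ∀ (x y : E n), y ≠ 0 → ∀ i : Fin n,
    ∑ k, pdx k (pdy i F) (x, y) * y k = ∑ k, pdx i (pdy k F) (x, y) * y k

/-- `(ℝⁿ, F)` is rectilinear in the standard coordinates. -/
def Rectilinear {n : ℕ} (F : E n × E n → ℝ) : Prop :=
  ∀ (γ : ℝ → E n) (t₁ t₂ : ℝ), IsGeodesic F γ t₁ t₂ →
    ∃ (f : ℝ → ℝ) (a b : E n), a ≠ 0 ∧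
      ContDiffOn ℝ 2 f (Set.Ioo t₁ t₂) ∧
      (∀ t ∈ Set.Ioo t₁ t₂, 0 < deriv f t) ∧
      ∀ t ∈ Set.Ioo t₁ t₂, γ t = f t • a + b

/-- `∂φ^m/∂x^s` : entry `m` of the Jacobian of `φ` applied to the `s`-th basis vector. -/
def Dphi {n : ℕ} (φ : E n → E n) (x : E n) (s m : Fin n) : ℝ :=
  fderiv ℝ φ x (Pi.single s 1) m

/-- `∂²φ^l/∂x^s∂x^k`. -/
def D2phi {n : ℕ} (φ : E n → E n) (x : E n) (s k l : Fin n) : ℝ :=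
  fderiv ℝ (fun x' => fderiv ℝ φ x' (Pi.single k 1) l) x (Pi.single s 1)

/-!
Write `T (x, y) = (φ x, Dφ(x) y)`, so that `F = F̄ ∘ T`. The fibre derivative transforms linearly,
`∂F/∂y = (∂F̄/∂ȳ ∘ T) ∘ Dφ`. Differentiating once more in a base direction `u` yields the mixed
second derivative of `F̄` along `Dφ(u)`, the fibre Hessian of `F̄` along `D²φ(u, y)`, and the
first-order term `∂F̄/∂ȳ ∘ D²φ(u, ·)`. The last one disappears on antisymmetrizing, because `D²φ` is
symmetric. What is left is a coordinate-free transformation law, whose expansion in the standard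
basis, contracted with `y`, is the identity.
-/

section Calculus

variable {𝕜 V W Z : Type*} [NontriviallyNormedField 𝕜]
  [NormedAddCommGroup V] [NormedSpace 𝕜 V] [NormedAddCommGroup W] [NormedSpace 𝕜 W]
  [NormedAddCommGroup Z] [NormedSpace 𝕜 Z]

lemma differentiableAt_fderiv_of_contDiffAt_two {f : V → Z} {x : V} (hf : ContDiffAt 𝕜 2 f x) :
    DifferentiableAt 𝕜 (fderiv 𝕜 f) x :=
  (hf.fderiv_right (m := 1) one_add_one_eq_two.le).differentiableAt one_ne_zero

lemma fderiv_injective_of_leftInverse {φ : V → W} {ψ : W → V} {x : V}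
    (hφ : DifferentiableAt 𝕜 φ x) (hψ : DifferentiableAt 𝕜 ψ (φ x))
    (hinv : Function.LeftInverse ψ φ) : Function.Injective (fderiv 𝕜 φ x) := by
  have hcomp : (fderiv 𝕜 ψ (φ x)).comp (fderiv 𝕜 φ x) = .id 𝕜 V := by
    rw [← fderiv_comp x hψ hφ, hinv.comp_eq_id, fderiv_id]
  exact Function.LeftInverse.injective fun v => DFunLike.congr_fun hcomp v

variable (𝕜) in
/-- The tangent map `(x, y) ↦ (φ x, Dφ(x) y)` of a map between normed spaces, with the tangent
bundles identified with `V × V` and `W × W`. -/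
def prodTangentMap (φ : V → W) (p : V × V) : W × W :=
  (φ p.1, fderiv 𝕜 φ p.1 p.2)

lemma contDiffAt_of_contDiffOn_range_prod_ne_zero {k : WithTop ℕ∞} {G : W × W → Z} {φ : V → W}
    {p : V × V} (hopen : IsOpen (Set.range φ)) (hinj : Function.Injective (fderiv 𝕜 φ p.1))
    (hG : ContDiffOn 𝕜 k G {q : W × W | q.1 ∈ Set.range φ ∧ q.2 ≠ 0}) (hp : p.2 ≠ 0) :
    ContDiffAt 𝕜 k G (prodTangentMap 𝕜 φ p) := by
  have hdomain : IsOpen {q : W × W | q.1 ∈ Set.range φ ∧ q.2 ≠ 0} :=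
    (hopen.preimage continuous_fst).inter (isOpen_ne.preimage continuous_snd)
  exact hG.contDiffAt (hdomain.mem_nhds ⟨Set.mem_range_self _, (map_ne_zero_iff _ hinj).2 hp⟩)

variable (𝕜) in
/-- The fibre derivative of a function on `V × W`, viewed as a bundle over `V` with fibre `W`. -/
def fiberDeriv (F : V × W → Z) (p : V × W) : W →L[𝕜] Z :=
  (fderiv 𝕜 F p).comp (.inr 𝕜 V W)

variable (𝕜) in
/-- The second derivative of `F` along the fibre, as a bilinear map. -/
def fiberHessian (F : V × W → Z) (p : V × W) : W →L[𝕜] W →L[𝕜] Z :=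
  (fderiv 𝕜 (fiberDeriv 𝕜 F) p).comp (.inr 𝕜 V W)

variable (𝕜) in
/-- The failure of the mixed (base, fibre) second derivative of `F` to be symmetric. Hamel's
equations say that this alternating form vanishes at `(x, y)` when contracted with `y`. -/
def hamelForm (F : V × V → Z) (p : V × V) : V →L[𝕜] V →L[𝕜] Z :=
  (fderiv 𝕜 (fiberDeriv 𝕜 F) p).comp (.inl 𝕜 V V) -
    ((fderiv 𝕜 (fiberDeriv 𝕜 F) p).comp (.inl 𝕜 V V)).flip

lemma hamelForm_apply (F : V × V → Z) (p : V × V) (u v : V) :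
    hamelForm 𝕜 F p u v =
      fderiv 𝕜 (fiberDeriv 𝕜 F) p (u, 0) v - fderiv 𝕜 (fiberDeriv 𝕜 F) p (v, 0) u :=
  rfl

lemma differentiableAt_fiberDeriv {F : V × W → Z} {p : V × W}
    (hF : DifferentiableAt 𝕜 (fderiv 𝕜 F) p) : DifferentiableAt 𝕜 (fiberDeriv 𝕜 F) p :=
  hF.clm_comp (differentiableAt_const _)

lemma hasFDerivAt_prodTangentMap {φ : V → W} {p : V × V} (hφ : DifferentiableAt 𝕜 φ p.1)
    (hφ' : DifferentiableAt 𝕜 (fderiv 𝕜 φ) p.1) :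
    HasFDerivAt (prodTangentMap 𝕜 φ)
      (((fderiv 𝕜 φ p.1).comp (.fst 𝕜 V V)).prod
        ((fderiv 𝕜 φ p.1).comp (.snd 𝕜 V V) +
          ((fderiv 𝕜 (fderiv 𝕜 φ) p.1).comp (.fst 𝕜 V V)).flip p.2)) p :=
  (hφ.hasFDerivAt.comp p hasFDerivAt_fst).prodMk
    ((hφ'.hasFDerivAt.comp p hasFDerivAt_fst).clm_apply hasFDerivAt_snd)

lemma fderiv_prodTangentMap_apply {φ : V → W} {p : V × V} (hφ : DifferentiableAt 𝕜 φ p.1)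
    (hφ' : DifferentiableAt 𝕜 (fderiv 𝕜 φ) p.1) (u v : V) :
    fderiv 𝕜 (prodTangentMap 𝕜 φ) p (u, v) =
      (fderiv 𝕜 φ p.1 u, fderiv 𝕜 φ p.1 v + fderiv 𝕜 (fderiv 𝕜 φ) p.1 u p.2) := by
  rw [(hasFDerivAt_prodTangentMap hφ hφ').fderiv]
  rfl

lemma fiberDeriv_comp_prodTangentMap {G : W × W → Z} {φ : V → W} {p : V × V}
    (hφ : DifferentiableAt 𝕜 φ p.1) (hφ' : DifferentiableAt 𝕜 (fderiv 𝕜 φ) p.1)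
    (hG : DifferentiableAt 𝕜 G (prodTangentMap 𝕜 φ p)) :
    fiberDeriv 𝕜 (G ∘ prodTangentMap 𝕜 φ) p =
      (fiberDeriv 𝕜 G (prodTangentMap 𝕜 φ p)).comp (fderiv 𝕜 φ p.1) := by
  ext v
  simp [fiberDeriv, fderiv_comp p hG (hasFDerivAt_prodTangentMap hφ hφ').differentiableAt,
    fderiv_prodTangentMap_apply hφ hφ']

lemma fderiv_fiberDeriv_apply_eq_add_fiberHessian {F : V × W → Z} (p : V × W) (u : V) (w v : W) :
    fderiv 𝕜 (fiberDeriv 𝕜 F) p (u, w) v =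
      fderiv 𝕜 (fiberDeriv 𝕜 F) p (u, 0) v + fiberHessian 𝕜 F p w v := by
  have hsplit : ((u, w) : V × W) = (u, 0) + (0, w) := by simp
  rw [hsplit, map_add]
  rfl

section Pullback

variable {F : V × V → Z} {G : W × W → Z} {φ : V → W} {p : V × V}

lemma fiberDeriv_eventuallyEq_of_eventuallyEq_comp (hφ : ContDiffAt 𝕜 2 φ p.1)
    (hG : ContDiffAt 𝕜 2 G (prodTangentMap 𝕜 φ p)) (hF : F =ᶠ[𝓝 p] G ∘ prodTangentMap 𝕜 φ) :
    fiberDeriv 𝕜 F =ᶠ[𝓝 p] fun q =>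
      (fiberDeriv 𝕜 G (prodTangentMap 𝕜 φ q)).comp (fderiv 𝕜 φ q.1) := by
  have hT : ContinuousAt (prodTangentMap 𝕜 φ) p :=
    (hasFDerivAt_prodTangentMap (hφ.differentiableAt two_ne_zero)
      (differentiableAt_fderiv_of_contDiffAt_two hφ)).continuousAt
  filter_upwards [hF.eventuallyEq_nhds,
    continuousAt_fst.eventually (hφ.eventually (by decide)),
    hT.eventually (hG.eventually (by decide))] with q hFq hφq hGq
  rw [← fiberDeriv_comp_prodTangentMap (hφq.differentiableAt two_ne_zero)
    (differentiableAt_fderiv_of_contDiffAt_two hφq) (hGq.differentiableAt two_ne_zero)]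
  simp only [fiberDeriv, hFq.fderiv_eq]

lemma hasFDerivAt_fiberDeriv_of_eventuallyEq_comp (hφ : ContDiffAt 𝕜 2 φ p.1)
    (hG : ContDiffAt 𝕜 2 G (prodTangentMap 𝕜 φ p)) (hF : F =ᶠ[𝓝 p] G ∘ prodTangentMap 𝕜 φ) :
    HasFDerivAt (fiberDeriv 𝕜 F)
      ((ContinuousLinearMap.compL 𝕜 V W Z (fiberDeriv 𝕜 G (prodTangentMap 𝕜 φ p))).comp
          ((fderiv 𝕜 (fderiv 𝕜 φ) p.1).comp (.fst 𝕜 V V)) +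
        ((ContinuousLinearMap.compL 𝕜 V W Z).flip (fderiv 𝕜 φ p.1)).comp
          ((fderiv 𝕜 (fiberDeriv 𝕜 G) (prodTangentMap 𝕜 φ p)).comp
            (fderiv 𝕜 (prodTangentMap 𝕜 φ) p))) p := by
  have hφ' := differentiableAt_fderiv_of_contDiffAt_two hφ
  have hG' := differentiableAt_fiberDeriv (differentiableAt_fderiv_of_contDiffAt_two hG)
  have hT := (hasFDerivAt_prodTangentMap (hφ.differentiableAt two_ne_zero) hφ').differentiableAt
  exact ((hG'.hasFDerivAt.comp p hT.hasFDerivAt).clm_comp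
    (hφ'.hasFDerivAt.comp p hasFDerivAt_fst)).congr_of_eventuallyEq
      (fiberDeriv_eventuallyEq_of_eventuallyEq_comp hφ hG hF)

lemma fderiv_fiberDeriv_apply_of_eventuallyEq_comp (hφ : ContDiffAt 𝕜 2 φ p.1)
    (hG : ContDiffAt 𝕜 2 G (prodTangentMap 𝕜 φ p)) (hF : F =ᶠ[𝓝 p] G ∘ prodTangentMap 𝕜 φ)
    (u v : V) :
    fderiv 𝕜 (fiberDeriv 𝕜 F) p (u, 0) v =
      fderiv 𝕜 (fiberDeriv 𝕜 G) (prodTangentMap 𝕜 φ p)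
          (fderiv 𝕜 φ p.1 u, fderiv 𝕜 (fderiv 𝕜 φ) p.1 u p.2) (fderiv 𝕜 φ p.1 v) +
        fiberDeriv 𝕜 G (prodTangentMap 𝕜 φ p) (fderiv 𝕜 (fderiv 𝕜 φ) p.1 u v) := by
  rw [(hasFDerivAt_fiberDeriv_of_eventuallyEq_comp hφ hG hF).fderiv]
  simp [fderiv_prodTangentMap_apply (hφ.differentiableAt two_ne_zero)
    (differentiableAt_fderiv_of_contDiffAt_two hφ), add_comm]

end Pullback

variable [IsRCLikeNormedField 𝕜]

lemma fiberHessian_comm {F : V × W → Z} {p : V × W} (hF : ContDiffAt 𝕜 2 F p) (v w : W) :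
    fiberHessian 𝕜 F p v w = fiberHessian 𝕜 F p w v := by
  have hHessian (v w : W) :
      fiberHessian 𝕜 F p v w = fderiv 𝕜 (fderiv 𝕜 F) p (0, v) (0, w) := by
    have hderiv := (differentiableAt_fderiv_of_contDiffAt_two hF).hasFDerivAt.clm_comp
      (hasFDerivAt_const (ContinuousLinearMap.inr 𝕜 V W) p)
    change fderiv 𝕜 (fun q => (fderiv 𝕜 F q).comp (.inr 𝕜 V W)) p (0, v) w = _
    rw [hderiv.fderiv]
    simp
  rw [hHessian, hHessian]
  exact (hF.isSymmSndFDerivAt (by simp)).eq _ _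

lemma hamelForm_of_eventuallyEq_comp {F : V × V → Z} {G : W × W → Z} {φ : V → W} {p : V × V}
    (hφ : ContDiffAt 𝕜 2 φ p.1) (hG : ContDiffAt 𝕜 2 G (prodTangentMap 𝕜 φ p))
    (hF : F =ᶠ[𝓝 p] G ∘ prodTangentMap 𝕜 φ) (u v : V) :
    hamelForm 𝕜 F p u v =
      hamelForm 𝕜 G (prodTangentMap 𝕜 φ p) (fderiv 𝕜 φ p.1 u) (fderiv 𝕜 φ p.1 v) +
        (fiberHessian 𝕜 G (prodTangentMap 𝕜 φ p) (fderiv 𝕜 φ p.1 v)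
            (fderiv 𝕜 (fderiv 𝕜 φ) p.1 u p.2) -
          fiberHessian 𝕜 G (prodTangentMap 𝕜 φ p) (fderiv 𝕜 φ p.1 u)
            (fderiv 𝕜 (fderiv 𝕜 φ) p.1 v p.2)) := by
  have hsymm : fderiv 𝕜 (fderiv 𝕜 φ) p.1 v u = fderiv 𝕜 (fderiv 𝕜 φ) p.1 u v :=
    (hφ.isSymmSndFDerivAt (by simp)).eq v u
  simp only [hamelForm_apply, fderiv_fiberDeriv_apply_of_eventuallyEq_comp hφ hG hF, hsymm,
    fderiv_fiberDeriv_apply_eq_add_fiberHessian _ (fderiv 𝕜 φ p.1 _)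
      (fderiv 𝕜 (fderiv 𝕜 φ) p.1 _ _),
    fiberHessian_comm hG (fderiv 𝕜 φ p.1 _)]
  abel

end Calculus

section Coordinates

lemma map_pi_eq_sum_smul_single {R M ι 𝓕 : Type*} [Semiring R] [AddCommMonoid M] [Module R M]
    [Fintype ι] [DecidableEq ι] [FunLike 𝓕 (ι → R) M] [LinearMapClass 𝓕 R (ι → R) M]
    (L : 𝓕) (v : ι → R) : L v = ∑ i, v i • L (Pi.single i 1) := by
  conv_lhs => rw [pi_eq_sum_univ' v]
  simp only [map_sum, map_smul]

lemma bilin_pi_eq_sum_mul_single {𝕜 ι κ : Type*} [NontriviallyNormedField 𝕜] [Fintype ι]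
    [DecidableEq ι] [Fintype κ] [DecidableEq κ] (B : (ι → 𝕜) →L[𝕜] (κ → 𝕜) →L[𝕜] 𝕜)
    (u : ι → 𝕜) (v : κ → 𝕜) :
    B u v = ∑ l, ∑ m, B (Pi.single m 1) (Pi.single l 1) * (u m * v l) := by
  rw [map_pi_eq_sum_smul_single (B u)]
  refine Finset.sum_congr rfl fun l _ => ?_
  rw [← ContinuousLinearMap.flip_apply, map_pi_eq_sum_smul_single (B.flip (Pi.single l 1)),
    Finset.smul_sum]
  refine Finset.sum_congr rfl fun m _ => ?_
  simp only [ContinuousLinearMap.flip_apply, smul_eq_mul]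
  ring

variable {n : ℕ}

lemma pdx_pdy_eq_fderiv_fiberDeriv {F : E n × E n → ℝ} {p : E n × E n}
    (hF : DifferentiableAt ℝ (fiberDeriv ℝ F) p) (m l : Fin n) :
    pdx m (pdy l F) p =
      fderiv ℝ (fiberDeriv ℝ F) p (Pi.single m 1, 0) (Pi.single l 1) := by
  change fderiv ℝ (fun q => fiberDeriv ℝ F q (Pi.single l 1)) p _ = _
  simp [fderiv_clm_apply hF (differentiableAt_const _)]

lemma pdy_pdy_eq_fiberHessian {F : E n × E n → ℝ} {p : E n × E n}
    (hF : DifferentiableAt ℝ (fiberDeriv ℝ F) p) (r l : Fin n) :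
    pdy r (pdy l F) p = fiberHessian ℝ F p (Pi.single r 1) (Pi.single l 1) := by
  change fderiv ℝ (fun q => fiberDeriv ℝ F q (Pi.single l 1)) p _ = _
  simp [fderiv_clm_apply hF (differentiableAt_const _), fiberHessian]

lemma pdx_pdy_sub_pdx_pdy_eq_hamelForm {F : E n × E n → ℝ} {p : E n × E n}
    (hF : DifferentiableAt ℝ (fiberDeriv ℝ F) p) (m l : Fin n) :
    pdx m (pdy l F) p - pdx l (pdy m F) p =
      hamelForm ℝ F p (Pi.single m 1) (Pi.single l 1) := by
  rw [pdx_pdy_eq_fderiv_fiberDeriv hF, pdx_pdy_eq_fderiv_fiberDeriv hF, hamelForm_apply]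

lemma D2phi_eq_fderiv_fderiv {φ : E n → E n} {x : E n} (hφ : DifferentiableAt ℝ (fderiv ℝ φ) x)
    (s k l : Fin n) :
    D2phi φ x s k l = fderiv ℝ (fderiv ℝ φ) x (Pi.single s 1) (Pi.single k 1) l := by
  have hcol : DifferentiableAt ℝ (fun x' => fderiv ℝ φ x' (Pi.single k 1)) x :=
    hφ.clm_apply (differentiableAt_const _)
  rw [D2phi, fderiv_apply hcol]
  simp [fderiv_clm_apply hφ (differentiableAt_const _)]

lemma fiberHessian_fderiv_single_eq_sum {φ : E n → E n} {G : E n × E n → ℝ} {x : E n}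
    {q : E n × E n} (hφ : DifferentiableAt ℝ (fderiv ℝ φ) x)
    (hG : DifferentiableAt ℝ (fiberDeriv ℝ G) q) (y : E n) (s i : Fin n) :
    fiberHessian ℝ G q (fderiv ℝ φ x (Pi.single i 1))
        (fderiv ℝ (fderiv ℝ φ) x (Pi.single s 1) y) =
      ∑ k, ∑ l, ∑ r, pdy r (pdy l G) q * (D2phi φ x s k l * Dphi φ x i r) * y k := by
  rw [map_pi_eq_sum_smul_single (fderiv ℝ (fderiv ℝ φ) x (Pi.single s 1)), map_sum]
  refine Finset.sum_congr rfl fun k _ => ?_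
  rw [map_smul, bilin_pi_eq_sum_mul_single, smul_eq_mul, mul_comm]
  simp only [Finset.sum_mul, ← pdy_pdy_eq_fiberHessian hG, ← D2phi_eq_fderiv_fderiv hφ, Dphi,
    mul_comm (D2phi φ x s k _)]

lemma hamelForm_fderiv_single_eq_sum {φ : E n → E n} {G : E n × E n → ℝ} {q : E n × E n}
    (hG : DifferentiableAt ℝ (fiberDeriv ℝ G) q) (x : E n) (s i : Fin n) :
    hamelForm ℝ G q (fderiv ℝ φ x (Pi.single s 1)) (fderiv ℝ φ x (Pi.single i 1)) =
      ∑ l, ∑ m, (pdx m (pdy l G) q - pdx l (pdy m G) q) * (Dphi φ x s m * Dphi φ x i l) := by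
  rw [bilin_pi_eq_sum_mul_single]
  simp only [pdx_pdy_sub_pdx_pdy_eq_hamelForm hG, Dphi]

section Transformation

variable {F Fb : E n × E n → ℝ} {φ : E n → E n} {x y : E n}

lemma pdx_pdy_sub_pdx_pdy_of_eventuallyEq_comp (hφ : ContDiffAt ℝ 2 φ x)
    (hFb : ContDiffAt ℝ 2 Fb (φ x, fderiv ℝ φ x y))
    (hF : F =ᶠ[𝓝 (x, y)] Fb ∘ prodTangentMap ℝ φ) (s i : Fin n) :
    pdx s (pdy i F) (x, y) - pdx i (pdy s F) (x, y) =
      (∑ l, ∑ m,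
        (pdx m (pdy l Fb) (φ x, fderiv ℝ φ x y) - pdx l (pdy m Fb) (φ x, fderiv ℝ φ x y)) *
          (Dphi φ x s m * Dphi φ x i l)) +
      ∑ k, ∑ l, ∑ r,
        pdy r (pdy l Fb) (φ x, fderiv ℝ φ x y) *
          (D2phi φ x s k l * Dphi φ x i r - D2phi φ x i k l * Dphi φ x s r) * y k := by
  have hφ' := differentiableAt_fderiv_of_contDiffAt_two hφ
  have hFb' := differentiableAt_fiberDeriv (differentiableAt_fderiv_of_contDiffAt_two hFb)
  have hF' := (hasFDerivAt_fiberDeriv_of_eventuallyEq_comp (p := (x, y)) hφ hFb hF).differentiableAt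
  rw [pdx_pdy_sub_pdx_pdy_eq_hamelForm hF', hamelForm_of_eventuallyEq_comp hφ hFb hF,
    prodTangentMap, hamelForm_fderiv_single_eq_sum hFb',
    fiberHessian_fderiv_single_eq_sum hφ' hFb', fiberHessian_fderiv_single_eq_sum hφ' hFb']
  simp only [mul_sub, sub_mul, Finset.sum_sub_distrib]

theorem statement5_general (hφ : ContDiffAt ℝ 2 φ x)
    (hFb : ContDiffAt ℝ 2 Fb (φ x, fderiv ℝ φ x y))
    (hF : F =ᶠ[𝓝 (x, y)] Fb ∘ prodTangentMap ℝ φ) (i : Fin n) :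
    (∑ s, pdx s (pdy i F) (x, y) * y s) - (∑ s, pdx i (pdy s F) (x, y) * y s) =
    (∑ s, ∑ l, ∑ m,
      (pdx m (pdy l Fb) (φ x, fderiv ℝ φ x y) - pdx l (pdy m Fb) (φ x, fderiv ℝ φ x y)) *
        (Dphi φ x s m * Dphi φ x i l) * y s) +
    (∑ s, ∑ k, ∑ l, ∑ r,
      pdy r (pdy l Fb) (φ x, fderiv ℝ φ x y) *
        (D2phi φ x s k l * Dphi φ x i r - D2phi φ x i k l * Dphi φ x s r) *
        (y s * y k)) := by
  rw [← Finset.sum_sub_distrib, ← Finset.sum_add_distrib]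
  refine Finset.sum_congr rfl fun s _ => ?_
  rw [← sub_mul, pdx_pdy_sub_pdx_pdy_of_eventuallyEq_comp hφ hFb hF s i]
  simp only [add_mul, Finset.sum_mul, mul_assoc, mul_comm (y _) (y s)]

end Transformation

end Coordinates

/-- the coordinate-change identity for the Hamel defect. -/
theorem statement5 {n : ℕ} (F : E n × E n → ℝ)
    (hFsmooth : ContDiffOn ℝ (⊤ : ℕ∞) F {p : E n × E n | p.2 ≠ 0})
    (hFhomog : ∀ (x y : E n) (c : ℝ), 0 < c → F (x, c • y) = c * F (x, y))
    (φ ψ : E n → E n)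
    (hφ : ContDiff ℝ (⊤ : ℕ∞) φ) (hopen : IsOpen (Set.range φ))
    (hψ : ContDiffOn ℝ (⊤ : ℕ∞) ψ (Set.range φ)) (hinv : ∀ x : E n, ψ (φ x) = x)
    (Fb : E n × E n → ℝ)
    (hFb : ∀ (x y : E n), Fb (φ x, fderiv ℝ φ x y) = F (x, y))
    (hFbsmooth : ContDiffOn ℝ (⊤ : ℕ∞) Fb {p : E n × E n | p.1 ∈ Set.range φ ∧ p.2 ≠ 0}) :
    ∀ (x y : E n), y ≠ 0 → ∀ i : Fin n,
      (∑ s, pdx s (pdy i F) (x, y) * y s) - (∑ s, pdx i (pdy s F) (x, y) * y s) =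
      (∑ s, ∑ l, ∑ m,
        (pdx m (pdy l Fb) (φ x, fderiv ℝ φ x y) - pdx l (pdy m Fb) (φ x, fderiv ℝ φ x y)) *
          (Dphi φ x s m * Dphi φ x i l) * y s) +
      (∑ s, ∑ k, ∑ l, ∑ r,
        pdy r (pdy l Fb) (φ x, fderiv ℝ φ x y) *
          (D2phi φ x s k l * Dphi φ x i r - D2phi φ x i k l * Dphi φ x s r) *
          (y s * y k)) := by
  intro x y hy i
  have hinj : Function.Injective (fderiv ℝ φ x) :=
    fderiv_injective_of_leftInverse (hφ.contDiffAt.differentiableAt (by simp))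
      ((hψ.contDiffAt (hopen.mem_nhds ⟨x, rfl⟩)).differentiableAt (by simp)) hinv
  have hsmooth : ContDiffAt ℝ (⊤ : ℕ∞) Fb (φ x, fderiv ℝ φ x y) :=
    contDiffAt_of_contDiffOn_range_prod_ne_zero (p := (x, y)) hopen hinj hFbsmooth hy
  exact statement5_general (contDiffAt_infty.1 hφ.contDiffAt 2) (contDiffAt_infty.1 hsmooth 2)
    (.of_forall fun p => (hFb p.1 p.2).symm) i
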